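/- Let R be a ring. The following are equivalent: (1) R has a left Artinian left quotient ring Q = C⁻¹R; (2) the conditions hold: (a) R̄ is a left Goldie ring, (b) n is a nilpotent ideal, (c) C' ⊆ C, (e) for every c̄ ∈ C̄ the right multiplication map f_i → f_i, f ↦ f·c̄, is injective for all i ≥ 1, together with either of the following: (d1) the left R̄-modules f_i, i ≥ 1, satisfy the ascending chain condition on C̄-closed submodules, or (d2) the left R̄-modules f_i, i ≥ 1, satisfy the descending chain condition on C̄-closed submodules. -/

import Mathlib

open Function

universe u v

/-- A regular element of a ring: a two-sided non-zero-divisor. -/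
def IsRegElem {R : Type*} [Ring R] (c : R) : Prop :=
  (∀ x : R, c * x = 0 → x = 0) ∧ (∀ x : R, x * c = 0 → x = 0)

/-- The set `C` of regular elements of a ring. -/
def regSet (R : Type*) [Ring R] : Set R := {c : R | IsRegElem c}

/-- A (left) ideal is two-sided. -/
def Ideal.IsTwoSidedNC {R : Type*} [Ring R] (I : Ideal R) : Prop :=
  ∀ a ∈ I, ∀ r : R, a * r ∈ I

/-- A prime (two-sided) ideal of a possibly noncommutative ring. -/
def Ideal.IsPrimeNC {R : Type*} [Ring R] (P : Ideal R) : Prop :=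
  P ≠ ⊤ ∧ P.IsTwoSidedNC ∧ ∀ a b : R, (∀ r : R, a * r * b ∈ P) → a ∈ P ∨ b ∈ P

/-- The prime radical `n` of a ring: the intersection of all prime ideals. -/
def primeRadical (R : Type*) [Ring R] : Ideal R := sInf {P : Ideal R | P.IsPrimeNC}

/-- `n` is a nilpotent ideal. -/
def IsNilpotentIdeal {R : Type*} [Ring R] (I : Ideal R) : Prop := ∃ k : ℕ, I ^ (k + 1) = ⊥

/-- `φ : R →+* Q` realizes `Q` as a left quotient ring `C⁻¹R` of `R`:  `R` embeds in `Q`,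
every regular element of `R` becomes invertible in `Q`, and every element of `Q` has the
form `(φ c)⁻¹ * (φ r)` with `c` regular. -/
structure IsLeftQuotRing {R : Type u} {Q : Type v} [Ring R] [Ring Q] (φ : R →+* Q) : Prop where
  inj : Function.Injective φ
  isUnit : ∀ c : R, IsRegElem c → IsUnit (φ c)
  denom : ∀ q : Q, ∃ c r : R, IsRegElem c ∧ φ c * q = φ r

/-- Data of a left quotient ring of `R`. -/
structure LeftQuotData (R : Type u) [Ring R] : Type (u + 1) where
  Q : Type u
  [instQ : Ring Q]
  φ : R →+* Q
  quot : IsLeftQuotRing φ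

attribute [instance] LeftQuotData.instQ

/-- `R` has a left Artinian left quotient ring `Q = C⁻¹R`. -/
def HasArtinianLeftQuot (R : Type u) [Ring R] : Prop :=
  ∃ d : LeftQuotData R, IsArtinianRing d.Q

/-- A subset of a ring is a left annihilator. -/
def IsLeftAnnihilatorSet {R : Type*} [Ring R] (A : Set R) : Prop :=
  ∃ S : Set R, A = {r : R | ∀ s ∈ S, r * s = 0}

/-- The ascending chain condition on left annihilators. -/
def ACCLeftAnnihilators (R : Type*) [Ring R] : Prop :=
  ∀ f : ℕ → Set R, (∀ i, IsLeftAnnihilatorSet (f i)) → (∀ i j, i ≤ j → f i ⊆ f j) →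
    ∃ N, ∀ k, N ≤ k → f k = f N

/-- The module `M` contains no infinite direct sum of nonzero submodules. -/
def NoInfiniteIndepFamily (R : Type*) (M : Type*) [Ring R] [AddCommGroup M] [Module R M] : Prop :=
  ¬ ∃ f : ℕ → Submodule R M, (∀ i, f i ≠ ⊥) ∧ iSupIndep f

/-- A left Goldie ring: ACC on left annihilators and no infinite direct sums of nonzero
left ideals. -/
def IsLeftGoldie (R : Type*) [Ring R] : Prop :=
  ACCLeftAnnihilators R ∧ NoInfiniteIndepFamily R R

/-- The subquotient `n^i/n^{i+1}` of `R` determined by the prime radical `n`. -/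
abbrev grPiece (R : Type*) [Ring R] (i : ℕ) :=
  ↥(primeRadical R ^ i) ⧸
    (Submodule.comap (primeRadical R ^ i : Ideal R).subtype (primeRadical R ^ (i + 1)))

/-- The class of `x ∈ n^i` in `n^i/n^{i+1}`. -/
def grMk {R : Type*} [Ring R] (i : ℕ) (x : R) (hx : x ∈ primeRadical R ^ i) : grPiece R i :=
  Submodule.Quotient.mk ⟨x, hx⟩

/-- The `C̄`-torsion submodule `τ_i` of `n^i/n^{i+1}` (take the span, which coincides with the
set of torsion elements whenever the latter is a submodule, e.g. when `C̄` is a left Ore set);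
here `C̄` is represented through `π : R → R̄` as `{c : R | IsRegElem (π c)}`. -/
def tauSub {R : Type u} {Rbar : Type v} [Ring R] [Ring Rbar] (π : R →+* Rbar) (i : ℕ) :
    Submodule R (grPiece R i) :=
  Submodule.span R {u : grPiece R i | ∃ c : R, IsRegElem (π c) ∧ c • u = 0}

/-- The `C̄`-torsionfree module `f_i = (n^i/n^{i+1})/τ_i`. -/
abbrev fMod {R : Type u} {Rbar : Type v} [Ring R] [Ring Rbar] (π : R →+* Rbar) (i : ℕ) :=
  grPiece R i ⧸ tauSub π i

/-- The class of `x ∈ n^i` in `f_i`. -/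
def fMk {R : Type u} {Rbar : Type v} [Ring R] [Ring Rbar] (π : R →+* Rbar) (i : ℕ) (x : R)
    (hx : x ∈ primeRadical R ^ i) : fMod π i :=
  Submodule.Quotient.mk (grMk i x hx)

/-- The subset `C⁻¹K = {(φ c)⁻¹ (φ a) : c ∈ C, a ∈ K}` of a left quotient ring. -/
def locSet {R : Type u} {Q : Type v} [Ring R] [Ring Q] (φ : R →+* Q) (K : Ideal R) : Set Q :=
  {q : Q | ∃ c a : R, IsRegElem c ∧ a ∈ K ∧ φ c * q = φ a}

/-- A subset of a ring is a left Ore set (multiplicatively closed and satisfying the left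
Ore condition). -/
def IsLeftOreSubset {A : Type*} [Ring A] (S : Set A) : Prop :=
  (1 : A) ∈ S ∧ (∀ s ∈ S, ∀ t ∈ S, s * t ∈ S) ∧
    ∀ s ∈ S, ∀ a : A, ∃ t ∈ S, ∃ b : A, t * a = b * s

/-- A left denominator set. -/
def IsLeftDenominatorSet {A : Type*} [Ring A] (S : Set A) : Prop :=
  IsLeftOreSubset S ∧ ∀ a : A, ∀ s ∈ S, a * s = 0 → ∃ t ∈ S, t * a = 0


/-- A submodule `N` of an `R̄`-module is `C̄`-closed (with `C̄` represented via `π` as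
`{c : R | IsRegElem (π c)}`): `c̄ • m ∈ N` implies `m ∈ N`. -/
def IsCbarClosedSubmodule {R : Type u} {Rbar : Type v} [Ring R] [Ring Rbar] (π : R →+* Rbar)
    {M : Type*} [AddCommGroup M] [Module R M] (N : Submodule R M) : Prop :=
  ∀ c : R, IsRegElem (π c) → ∀ m : M, c • m ∈ N → m ∈ N


section IndependentFamilies

variable {A M : Type*} [Ring A] [AddCommGroup M] [Module A M]

theorem iSupIndep_of_antitone_disjoint {X N : ℕ → Submodule A M} (hN : Antitone N)
    (hX : ∀ k, X k ≤ N k) (hd : ∀ k, Disjoint (X k) (N (k + 1))) : iSupIndep X := by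
  rw [iSupIndep_iff_finsetSum_eq_zero_imp_eq_zero]
  intro s
  induction s using Finset.induction_on_min with
  | empty => simp
  | insert a s ha ih =>
    intro v hv h0
    rw [Finset.sum_insert (fun h => lt_irrefl _ (ha a h))] at h0
    have hs : ∑ i ∈ s, v i ∈ N (a + 1) :=
      Submodule.sum_mem _ fun i hi =>
        hN (Nat.succ_le_of_lt (ha i hi)) (hX i (hv i (Finset.mem_insert_of_mem hi)))
    have hva : v a = 0 := by
      refine Submodule.disjoint_def.1 (hd a) _ (hv a (Finset.mem_insert_self _ _)) ?_
      rw [eq_neg_of_add_eq_zero_left h0]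
      exact neg_mem hs
    rw [hva, zero_add] at h0
    intro i hi
    rcases Finset.mem_insert.1 hi with rfl | hi
    · exact hva
    · exact ih v (fun i hi => hv i (Finset.mem_insert_of_mem hi)) h0 i hi

theorem NoInfiniteIndepFamily.exists_not_disjoint (h : NoInfiniteIndepFamily A M)
    {x : ℕ → M} {N : ℕ → Submodule A M} (hN : Antitone N) (hx : ∀ k, x k ∈ N k)
    (h0 : ∀ k, x k ≠ 0) : ∃ k, ∃ r : A, r • x k ∈ N (k + 1) ∧ r • x k ≠ 0 := by
  by_contra! hcon
  refine h ⟨fun k => Submodule.span A {x k}, fun k => ?_,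
    iSupIndep_of_antitone_disjoint hN (fun k => ?_) fun k => ?_⟩
  · simpa [Submodule.span_singleton_eq_bot] using h0 k
  · simpa [Submodule.span_singleton_le_iff_mem] using hx k
  · rw [Submodule.disjoint_def]
    intro y hy hyN
    obtain ⟨r, rfl⟩ := Submodule.mem_span_singleton.1 hy
    exact hcon k r hyN

end IndependentFamilies

section Goldie

variable {A : Type*} [Ring A]

theorem IsRegElem.one : IsRegElem (1 : A) :=
  ⟨fun x h => by simpa using h, fun x h => by simpa using h⟩

theorem IsRegElem.mul {a b : A} (ha : IsRegElem a) (hb : IsRegElem b) : IsRegElem (a * b) :=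
  ⟨fun x h => hb.1 _ (ha.1 _ (by rwa [← mul_assoc])),
    fun x h => ha.2 _ (hb.2 _ (by rwa [mul_assoc]))⟩

theorem IsRegElem.pow {a : A} (ha : IsRegElem a) (k : ℕ) : IsRegElem (a ^ k) := by
  induction k with
  | zero => simpa using IsRegElem.one
  | succ k ih => simpa [pow_succ] using ih.mul ha

/-- A semiprime left Goldie ring. -/
structure IsSemiprimeLeftGoldie (A : Type*) [Ring A] : Prop where
  semiprime : ∀ a : A, (∀ r : A, a * r * a = 0) → a = 0
  goldie : IsLeftGoldie A

/-- An essential left ideal, phrased elementwise. -/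
def Ideal.IsEssentialLeft (E : Ideal A) : Prop := ∀ a : A, a ≠ 0 → ∃ r : A, r * a ≠ 0 ∧ r * a ∈ E

/-- The left annihilator of an element. -/
def leftAnn (x : A) : Ideal A := LinearMap.ker (LinearMap.toSpanSingleton A A x)

@[simp]
theorem mem_leftAnn {x r : A} : r ∈ leftAnn x ↔ r * x = 0 := by
  simp [leftAnn]

theorem leftAnn_le_mul (x y : A) : leftAnn x ≤ leftAnn (x * y) := by
  intro r hr
  rw [mem_leftAnn] at *
  rw [← mul_assoc, hr, zero_mul]

theorem ACCLeftAnnihilators.exists_maximal (h : ACCLeftAnnihilators A) (T : Set A)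
    (hT : T.Nonempty) : ∃ x ∈ T, ∀ y ∈ T, leftAnn x ≤ leftAnn y → leftAnn y ≤ leftAnn x := by
  have hwf : WellFoundedGT {I : Ideal A // IsLeftAnnihilatorSet (I : Set A)} := by
    rw [wellFoundedGT_iff_monotone_chain_condition]
    intro f
    obtain ⟨N, hN⟩ := h (fun i => ((f i : Ideal A) : Set A)) (fun i => (f i).2)
      (fun i j hij => f.monotone hij)
    exact ⟨N, fun m hm => Subtype.ext (SetLike.coe_injective (hN m hm).symm)⟩
  let F : A → {I : Ideal A // IsLeftAnnihilatorSet (I : Set A)} := fun x =>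
    ⟨leftAnn x, {x}, by ext r; simp⟩
  obtain ⟨_, ⟨x, hx, rfl⟩, hmax⟩ := hwf.wf.has_min (F '' T) (hT.image F)
  refine ⟨x, hx, fun y hy hle => ?_⟩
  by_contra hcon
  exact hmax (F y) ⟨y, hy, rfl⟩ (lt_of_le_not_ge hle hcon)

namespace IsSemiprimeLeftGoldie

variable (h : IsSemiprimeLeftGoldie A)
include h

theorem eq_zero_of_forall_isNilpotent {a : A} (ha : ∀ r : A, IsNilpotent (r * a)) : a = 0 := by
  by_contra ha0
  obtain ⟨x, ⟨hx0, s, rfl⟩, hmax⟩ := h.goldie.1.exists_maximal {y | y ≠ 0 ∧ ∃ s, y = a * s}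
    ⟨a, ha0, 1, by simp⟩
  refine hx0 (h.semiprime _ fun r => ?_)
  have hnil : IsNilpotent (a * s * r) := by
    obtain ⟨k, hk⟩ := ha (s * r)
    refine ⟨k + 1, ?_⟩
    have : ∀ k : ℕ, (a * s * r) ^ (k + 1) = a * (s * r * a) ^ k * (s * r) := by
      intro k
      induction k with
      | zero => simp [mul_assoc]
      | succ k ih => rw [pow_succ, ih, pow_succ]; simp only [mul_assoc]
    rw [this, hk, mul_zero, zero_mul]
  classical
  have hk := Nat.find_spec hnil
  have hmin := fun m => Nat.find_min hnil (m := m)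
  generalize Nat.find hnil = k at hk hmin
  rcases k with _ | _ | k
  · rw [← mul_one (a * s * r * (a * s)), ← pow_zero (a * s * r), hk, mul_zero]
  · rw [zero_add, pow_one] at hk
    rw [hk, zero_mul]
  · have hne := hmin (k + 1) (by omega)
    have hle := hmax ((a * s * r) ^ (k + 1)) ⟨hne, s * r * (a * s * r) ^ k, by
      rw [pow_succ']; simp only [mul_assoc]⟩
      (by rw [pow_succ', mul_assoc (a * s)]; exact leftAnn_le_mul _ _)
    have := hle (x := a * s * r) (by rw [mem_leftAnn, ← pow_succ', hk])
    simpa using this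

theorem eq_zero_of_isEssentialLeft_leftAnn {x : A} (hx : (leftAnn x).IsEssentialLeft) :
    x = 0 := by
  refine h.eq_zero_of_forall_isNilpotent fun r => ?_
  have hz : ∀ a : A, a ≠ 0 → ∃ t, t * a ≠ 0 ∧ t * a * (r * x) = 0 := by
    intro a ha
    by_cases har : a * r = 0
    · exact ⟨1, by simpa using ha, by rw [one_mul, ← mul_assoc, har, zero_mul]⟩
    · obtain ⟨t, ht, htx⟩ := hx _ har
      refine ⟨t, fun h0 => ht (by rw [← mul_assoc, h0, zero_mul]), ?_⟩
      rw [mem_leftAnn] at htx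
      simpa [mul_assoc] using htx
  generalize r * x = z at hz
  obtain ⟨_, ⟨k, rfl⟩, hmax⟩ := h.goldie.1.exists_maximal (Set.range fun k : ℕ => z ^ k)
    (Set.range_nonempty _)
  refine ⟨k, ?_⟩
  by_contra hne
  obtain ⟨t, ht, htz⟩ := hz _ hne
  have := hmax (z ^ (k + 1)) ⟨k + 1, rfl⟩ (by rw [pow_succ]; exact leftAnn_le_mul _ _) (x := t)
    (by rw [mem_leftAnn, pow_succ, ← mul_assoc, htz])
  exact ht (by simpa using this)

theorem exists_mul_eq_mul_of_leftAnn {c : A} (hc : ∀ x, x * c = 0 → x = 0) {a : A} (ha : a ≠ 0) :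
    ∃ r s : A, r * a ≠ 0 ∧ r * a = s * c := by
  have hck : ∀ (k : ℕ) (x : A), x * c ^ k = 0 → x = 0 := by
    intro k
    induction k with
    | zero => simp
    | succ k ih => intro x hx; exact hc _ (ih _ (by rwa [mul_assoc, ← pow_succ']))
  obtain ⟨k, r, hr, hr0⟩ := h.goldie.2.exists_not_disjoint (x := fun k => a * c ^ k)
    (N := fun k => LinearMap.range (LinearMap.toSpanSingleton A A (c ^ k)))
    (antitone_nat_of_succ_le fun k => by
      rintro _ ⟨s, rfl⟩
      exact ⟨s * c, by simp [pow_succ', mul_assoc]⟩)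
    (fun k => ⟨a, by simp⟩) (fun k h0 => ha (hck k a h0))
  obtain ⟨s, hs⟩ := hr
  refine ⟨r, s, fun h0 => hr0 ?_, ?_⟩
  · rw [smul_eq_mul, ← mul_assoc, h0, zero_mul]
  · rw [← sub_eq_zero]
    refine hck k _ ?_
    simp only [LinearMap.toSpanSingleton_apply, smul_eq_mul] at hs
    rw [sub_mul, mul_assoc, ← hs, pow_succ', mul_assoc, sub_self]

theorem isRegElem_of_leftAnn {c : A} (hc : ∀ x, x * c = 0 → x = 0) : IsRegElem c := by
  refine ⟨fun x hx => h.eq_zero_of_isEssentialLeft_leftAnn fun a ha => ?_, hc⟩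
  obtain ⟨r, s, hr, hrs⟩ := h.exists_mul_eq_mul_of_leftAnn hc ha
  exact ⟨r, hr, by rw [mem_leftAnn, hrs, mul_assoc, hx, mul_zero]⟩

theorem exists_leftAnn_mul_self {F : Ideal A} {b : A} (hb : b ∈ F) (hb0 : b ≠ 0) :
    ∃ a ∈ F, a ≠ 0 ∧ ∀ x, x * a * a = 0 → x * a = 0 := by
  obtain ⟨r, hr⟩ : ∃ r, ¬ IsNilpotent (r * b) := by
    by_contra! hcon
    exact hb0 (h.eq_zero_of_forall_isNilpotent hcon)
  obtain ⟨_, ⟨k, rfl⟩, hmax⟩ := h.goldie.1.exists_maximal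
    (Set.range fun k : ℕ => (r * b) ^ (k + 1)) (Set.range_nonempty _)
  refine ⟨(r * b) ^ (k + 1), ?_, fun h0 => hr ⟨_, h0⟩, fun x hx => ?_⟩
  · rw [pow_succ]
    exact F.mul_mem_left _ (F.mul_mem_left _ hb)
  · have := hmax ((r * b) ^ (k + 1) * (r * b) ^ (k + 1)) ⟨k + 1 + k, by
      simp only [← pow_add]; congr 1⟩ (leftAnn_le_mul _ _) (x := x)
      (by rw [mem_leftAnn, ← mul_assoc, hx])
    simpa using this

theorem exists_isRegElem_mem {E : Ideal A} (hE : E.IsEssentialLeft) : ∃ c ∈ E, IsRegElem c := by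
  by_contra! hcon
  have step : ∀ c : {c : A // c ∈ E ∧ ∀ x, x * c * c = 0 → x * c = 0}, ∃ a ∈ E, a ≠ 0 ∧
      (∀ x, x * a * a = 0 → x * a = 0) ∧ a * c = 0 := by
    rintro ⟨c, hcE, hc⟩
    obtain ⟨u, huc, hu0⟩ : ∃ u, u * c = 0 ∧ u ≠ 0 := by
      by_contra! hu
      exact hcon c hcE (h.isRegElem_of_leftAnn hu)
    obtain ⟨r, hr0, hrE⟩ := hE u hu0
    obtain ⟨a, haF, ha0, ha⟩ := h.exists_leftAnn_mul_self (F := E ⊓ leftAnn c) (b := r * u)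
      ⟨hrE, by rw [SetLike.mem_coe, mem_leftAnn, mul_assoc, huc, mul_zero]⟩ hr0
    exact ⟨a, haF.1, ha0, ha, by simpa using haF.2⟩
  choose a haE ha0 haa hac using step
  have key : ∀ (c : {c : A // c ∈ E ∧ ∀ x, x * c * c = 0 → x * c = 0}) (x : A),
      x * (c + a c) * c = 0 ∨ x * (c + a c) = 0 → x * c = 0 ∧ x * a c * a c = x * (c + a c) * a c
      - x * c * a c := by
    intro c x hx
    refine ⟨c.2.2 _ ?_, by noncomm_ring⟩
    have h1 : x * (c + a c) * c = 0 := by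
      rcases hx with hx | hx
      · exact hx
      · rw [hx, zero_mul]
    rwa [mul_add, add_mul, mul_assoc x (a c), hac, mul_zero, add_zero] at h1
  have hkill : ∀ (c : {c : A // c ∈ E ∧ ∀ x, x * c * c = 0 → x * c = 0}) (x : A),
      x * (c + a c) = 0 → x * c = 0 ∧ x * a c = 0 := by
    intro c x hx
    obtain ⟨h1, -⟩ := key c x (Or.inr hx)
    rw [mul_add, h1, zero_add] at hx
    exact ⟨h1, hx⟩
  let next : {c : A // c ∈ E ∧ ∀ x, x * c * c = 0 → x * c = 0} →
      {c : A // c ∈ E ∧ ∀ x, x * c * c = 0 → x * c = 0} := fun c =>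
    ⟨c + a c, E.add_mem c.2.1 (haE c), fun x hx => by
      obtain ⟨h1, h2⟩ := hkill c _ hx
      obtain ⟨h3, h4⟩ := key c x (Or.inl h1)
      rw [h2, h3, zero_mul, sub_zero] at h4
      rw [mul_add, h3, haa c x h4, zero_add]⟩
  let seq : ℕ → {c : A // c ∈ E ∧ ∀ x, x * c * c = 0 → x * c = 0} := fun k =>
    next^[k] ⟨0, E.zero_mem, by simp⟩
  have hseq : ∀ k, (seq (k + 1) : A) = seq k + a (seq k) := fun k => by
    simp only [seq, Function.iterate_succ_apply', next]
  obtain ⟨k, r, hr, hr0⟩ := h.goldie.2.exists_not_disjoint (x := fun k => a (seq k))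
    (N := fun k => leftAnn (seq k : A))
    (antitone_nat_of_succ_le fun k x hx => by
      rw [mem_leftAnn, hseq] at hx
      exact mem_leftAnn.2 (hkill _ _ hx).1)
    (fun k => mem_leftAnn.2 (hac _)) (fun k => ha0 _)
  rw [mem_leftAnn, hseq] at hr
  exact hr0 (haa _ _ (hkill _ _ hr).2)

theorem leftOre (a : A) {c : A} (hc : IsRegElem c) :
    ∃ d b : A, IsRegElem d ∧ d * a = b * c := by
  obtain ⟨d, ⟨b, hb⟩, hd⟩ := h.exists_isRegElem_mem
    (E := (LinearMap.range (LinearMap.toSpanSingleton A A c)).comap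
      (LinearMap.toSpanSingleton A A a)) (by
      intro x hx
      by_cases hxa : x * a = 0
      · exact ⟨1, by simpa using hx, by simp [hxa]⟩
      · obtain ⟨r, s, hr, hrs⟩ := h.exists_mul_eq_mul_of_leftAnn hc.2 hxa
        refine ⟨r, fun h0 => hr (by rw [← mul_assoc, h0, zero_mul]), s, ?_⟩
        simpa [mul_assoc] using hrs.symm)
  exact ⟨d, b, hd, by simpa using hb.symm⟩

end IsSemiprimeLeftGoldie

end Goldie

section ClosedSubmodules

variable {R : Type*} {Rbar : Type*} [Ring R] [Ring Rbar] {π : R →+* Rbar}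
  {M : Type*} [AddCommGroup M] [Module R M]

theorem exists_leftOre_mod_ker (hπ : Function.Surjective π) (h : IsSemiprimeLeftGoldie Rbar)
    (a : R) {c : R} (hc : IsRegElem (π c)) :
    ∃ d b : R, IsRegElem (π d) ∧ π (d * a - b * c) = 0 := by
  obtain ⟨d, b, hd, hdb⟩ := h.leftOre (π a) hc
  obtain ⟨d, rfl⟩ := hπ d
  obtain ⟨b, rfl⟩ := hπ b
  exact ⟨d, b, hd, by simp [hdb]⟩

theorem exists_leftOre_smul (hπ : Function.Surjective π) (h : IsSemiprimeLeftGoldie Rbar)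
    (hM : ∀ r, π r = 0 → ∀ m : M, r • m = 0) (a : R) {c : R} (hc : IsRegElem (π c)) :
    ∃ d b : R, IsRegElem (π d) ∧ ∀ m : M, d • a • m = b • c • m := by
  obtain ⟨d, b, hd, hdb⟩ := exists_leftOre_mod_ker hπ h a hc
  refine ⟨d, b, hd, fun m => ?_⟩
  have := hM _ hdb m
  rwa [sub_smul, mul_smul, mul_smul, sub_eq_zero] at this

/-- The closure of a submodule: the elements that a regular element modulo `ker π` carries
into it. -/
def closureSub (hπ : Function.Surjective π) (h : IsSemiprimeLeftGoldie Rbar)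
    (hM : ∀ r, π r = 0 → ∀ m : M, r • m = 0) (N : Submodule R M) : Submodule R M where
  carrier := {m | ∃ c, IsRegElem (π c) ∧ c • m ∈ N}
  zero_mem' := ⟨1, by simpa using IsRegElem.one, by simp⟩
  add_mem' := by
    rintro m m' ⟨c, hc, hcm⟩ ⟨c', hc', hcm'⟩
    obtain ⟨d, b, hd, hdb⟩ := exists_leftOre_smul hπ h hM c hc'
    refine ⟨d * c, by simpa using hd.mul hc, ?_⟩
    rw [smul_add, mul_smul, mul_smul, hdb m']
    exact N.add_mem (N.smul_mem _ hcm) (N.smul_mem _ hcm')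
  smul_mem' := by
    rintro a m ⟨c, hc, hcm⟩
    obtain ⟨d, b, hd, hdb⟩ := exists_leftOre_smul hπ h hM a hc
    exact ⟨d, hd, by rw [hdb]; exact N.smul_mem _ hcm⟩

section

variable (hπ : Function.Surjective π) (h : IsSemiprimeLeftGoldie Rbar)
  (hM : ∀ r, π r = 0 → ∀ m : M, r • m = 0)
include hπ h hM

theorem mem_closureSub {N : Submodule R M} {m : M} :
    m ∈ closureSub hπ h hM N ↔ ∃ c, IsRegElem (π c) ∧ c • m ∈ N := Iff.rfl

theorem closureSub_mono {N N' : Submodule R M} (hle : N ≤ N') :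
    closureSub hπ h hM N ≤ closureSub hπ h hM N' :=
  fun _ ⟨c, hc, hcm⟩ => ⟨c, hc, hle hcm⟩

theorem isCbarClosedSubmodule_closureSub (N : Submodule R M) :
    IsCbarClosedSubmodule π (closureSub hπ h hM N) := by
  rintro c hc m ⟨d, hd, hdm⟩
  exact ⟨d * c, by simpa using hd.mul hc, by rwa [mul_smul]⟩

theorem exists_smul_mem_of_essential {N : Submodule R M} {m : M}
    (hm : ∀ r : R, r • m ≠ 0 → ∃ s : R, s • r • m ∈ N ∧ s • r • m ≠ 0) :
    ∃ c, IsRegElem (π c) ∧ c • m ∈ N := by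
  let E : Ideal R := N.comap (LinearMap.toSpanSingleton R M m)
  have hE : ∀ a, a ∈ E ↔ a • m ∈ N := fun a => by simp [E]
  obtain ⟨_, hc, hreg⟩ := h.exists_isRegElem_mem (E := E.map π) (by
      intro a ha
      obtain ⟨a, rfl⟩ := hπ a
      by_cases ham : a • m = 0
      · exact ⟨1, by simpa using ha, by
          rw [one_mul]
          exact Ideal.mem_map_of_mem π ((hE a).2 (ham ▸ N.zero_mem))⟩
      · obtain ⟨s, hs, hs0⟩ := hm a ham
        refine ⟨π s, fun h0 => hs0 ?_, ?_⟩
        · rw [← mul_smul, hM _ (by rw [map_mul, h0])]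
        · rw [← map_mul]
          exact Ideal.mem_map_of_mem π ((hE _).2 (by rwa [mul_smul])))
  obtain ⟨c, hcN, rfl⟩ := (Ideal.mem_map_iff_of_surjective π hπ).1 hc
  exact ⟨c, hreg, (hE c).1 hcN⟩

theorem NoInfiniteIndepFamily.stabilizes_of_isCbarClosedSubmodule
    (hI : NoInfiniteIndepFamily R M) (g : ℕ → Submodule R M)
    (hg : ∀ j, IsCbarClosedSubmodule π (g j)) (hanti : ∀ j k, j ≤ k → g k ≤ g j) :
    ∃ N, ∀ k, N ≤ k → g k = g N := by
  by_contra! hcon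
  have step : ∀ N, ∃ k, ∃ x ∈ g N, x ≠ 0 ∧ N ≤ k ∧ ∀ s : R, s • x ∈ g k → s • x = 0 := by
    intro N
    obtain ⟨k, hk, hne⟩ := hcon N
    obtain ⟨m, hmN, hmk⟩ := Set.not_subset.1 fun hle => hne (le_antisymm (hanti _ _ hk) hle)
    by_contra! hcon'
    obtain ⟨c, hc, hcm⟩ := exists_smul_mem_of_essential hπ h hM (N := g k) (m := m)
      fun r hr => hcon' k (r • m) ((g N).smul_mem _ hmN) hr hk
    exact hmk (hg k c hc m hcm)
  choose next x hx hx0 hle hdisj using step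
  let idx : ℕ → ℕ := fun j => next^[j] 0
  have hidx : ∀ j, idx (j + 1) = next (idx j) := fun j => Function.iterate_succ_apply' _ _ _
  obtain ⟨k, r, hr, hr0⟩ := hI.exists_not_disjoint (x := fun j => x (idx j))
    (N := fun j => g (idx j))
    (antitone_nat_of_succ_le fun j => hanti _ _ (by rw [hidx]; exact hle _))
    (fun j => hx _) (fun j => hx0 _)
  rw [hidx] at hr
  exact hr0 (hdisj _ _ hr)

theorem noInfiniteIndepFamily_of_stabilizes
    (htf : ∀ (c : R) (m : M), IsRegElem (π c) → c • m = 0 → m = 0)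
    (hacc : ∀ g : ℕ → Submodule R M, (∀ j, IsCbarClosedSubmodule π (g j)) →
      (∀ j k, j ≤ k → g j ≤ g k) → ∃ N, ∀ k, N ≤ k → g k = g N) :
    NoInfiniteIndepFamily R M := by
  rintro ⟨f, hf0, hf⟩
  obtain ⟨N, hN⟩ := hacc (fun j => closureSub hπ h hM (⨆ (i) (_ : i < j), f i))
    (fun j => isCbarClosedSubmodule_closureSub hπ h hM _)
    (fun j k hjk => closureSub_mono hπ h hM
      (iSup_mono fun i => iSup_const_mono fun hi => hi.trans_le hjk))
  obtain ⟨x, hx, hx0⟩ := (f N).exists_mem_ne_zero_of_ne_bot (hf0 N)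
  have hxN : x ∈ closureSub hπ h hM (⨆ (i) (_ : i < N), f i) := by
    rw [← hN (N + 1) (Nat.le_succ N)]
    refine ⟨1, by simpa using IsRegElem.one, ?_⟩
    rw [one_smul]
    exact (le_iSup₂_of_le (f := fun i (_ : i < N + 1) => f i) N (Nat.lt_succ_self N) le_rfl) hx
  obtain ⟨c, hc, hcx⟩ := hxN
  have hle : ⨆ (i) (_ : i < N), f i ≤ ⨆ (i) (_ : i ≠ N), f i :=
    iSup_mono fun i => iSup_const_mono fun hi => hi.ne
  exact hx0 (htf c x hc (Submodule.disjoint_def.1 (hf N) _ ((f N).smul_mem c hx) (hle hcx)))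

end

end ClosedSubmodules

section PrimeRadical

variable {R : Type*} [Ring R]

instance : (primeRadical R).IsTwoSided where
  mul_mem_of_left := by
    intro a b ha
    simp only [primeRadical, Submodule.mem_sInf] at *
    exact fun P hP => hP.2.1 a (ha P hP) b

theorem mem_primeRadical_of_forall_mul_mul_mem {a : R}
    (ha : ∀ r, a * r * a ∈ primeRadical R) : a ∈ primeRadical R := by
  simp only [primeRadical, Submodule.mem_sInf] at *
  exact fun P hP => (hP.2.2 a a fun r => ha r P hP).elim id id

theorem mul_mem_primeRadical_pow_succ {a x : R} (ha : a ∈ primeRadical R) {i : ℕ}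
    (hx : x ∈ primeRadical R ^ i) : a * x ∈ primeRadical R ^ (i + 1) := by
  rw [Ideal.IsTwoSided.pow_succ]
  exact Ideal.mul_mem_mul ha hx

theorem primeRadical_pow_succ_le (i : ℕ) : primeRadical R ^ (i + 1) ≤ primeRadical R ^ i := by
  rw [Submodule.pow_succ]
  exact Ideal.mul_le_left

theorem mem_primeRadical_pow_zero (x : R) : x ∈ primeRadical R ^ 0 := by
  rw [Submodule.pow_zero, Ideal.one_eq_top]
  trivial

/-- The projection of `n^i` onto `f_i`. -/
def fProj {Rbar : Type*} [Ring Rbar] (π : R →+* Rbar) (i : ℕ) :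
    ↥(primeRadical R ^ i) →ₗ[R] fMod π i :=
  (tauSub π i).mkQ ∘ₗ Submodule.mkQ _

theorem fProj_surjective {Rbar : Type*} [Ring Rbar] (π : R →+* Rbar) (i : ℕ) :
    Function.Surjective (fProj π i) :=
  (Submodule.mkQ_surjective _).comp (Submodule.mkQ_surjective _)

theorem fMk_eq_fProj {Rbar : Type*} [Ring Rbar] (π : R →+* Rbar) (i : ℕ) {x : R}
    (hx : x ∈ primeRadical R ^ i) : fMk π i x hx = fProj π i ⟨x, hx⟩ := rfl

variable {Rbar : Type*} [Ring Rbar] {π : R →+* Rbar}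
  (hπ : Function.Surjective π) (hker : RingHom.ker π = primeRadical R)
include hker

theorem map_eq_zero_iff_mem_primeRadical {x : R} : π x = 0 ↔ x ∈ primeRadical R := by
  rw [← hker, RingHom.mem_ker]

theorem smul_grPiece_eq_zero {i : ℕ} (r : R) (hr : π r = 0) (u : grPiece R i) : r • u = 0 := by
  obtain ⟨x, rfl⟩ := Submodule.mkQ_surjective _ u
  rw [← map_smul, Submodule.mkQ_apply, Submodule.Quotient.mk_eq_zero]
  exact mul_mem_primeRadical_pow_succ ((map_eq_zero_iff_mem_primeRadical hker).1 hr) x.2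

theorem smul_fMod_eq_zero {i : ℕ} (r : R) (hr : π r = 0) (u : fMod π i) : r • u = 0 := by
  obtain ⟨x, rfl⟩ := Submodule.mkQ_surjective _ u
  rw [← map_smul, smul_grPiece_eq_zero hker r hr, map_zero]

include hπ

theorem isSemiprimeLeftGoldie_of_isLeftGoldie (hG : IsLeftGoldie Rbar) :
    IsSemiprimeLeftGoldie Rbar := by
  refine ⟨fun a ha => ?_, hG⟩
  obtain ⟨a, rfl⟩ := hπ a
  rw [map_eq_zero_iff_mem_primeRadical hker]
  refine mem_primeRadical_of_forall_mul_mul_mem fun r => ?_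
  rw [← map_eq_zero_iff_mem_primeRadical hker]
  simpa using ha (π r)

variable (hG : IsSemiprimeLeftGoldie Rbar)
include hG

theorem fProj_eq_zero_iff {i : ℕ} (x : ↥(primeRadical R ^ i)) :
    fProj π i x = 0 ↔ ∃ c, IsRegElem (π c) ∧ c * (x : R) ∈ primeRadical R ^ (i + 1) := by
  have htau : tauSub π i = closureSub hπ hG (smul_grPiece_eq_zero hker) ⊥ :=
    Submodule.span_eq (closureSub hπ hG (smul_grPiece_eq_zero hker) (⊥ : Submodule R (grPiece R i)))
  rw [fProj, LinearMap.comp_apply, Submodule.mkQ_apply, Submodule.Quotient.mk_eq_zero, htau,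
    mem_closureSub]
  refine exists_congr fun c => and_congr_right fun _ => ?_
  rw [Submodule.mem_bot, ← map_smul, Submodule.mkQ_apply, Submodule.Quotient.mk_eq_zero]
  rfl

theorem eq_zero_of_smul_fMod_eq_zero {i : ℕ} (c : R) (u : fMod π i) (hc : IsRegElem (π c))
    (hu : c • u = 0) : u = 0 := by
  obtain ⟨x, rfl⟩ := fProj_surjective π i u
  rw [← map_smul, fProj_eq_zero_iff hπ hker hG] at hu
  obtain ⟨d, hd, hdx⟩ := hu
  rw [fProj_eq_zero_iff hπ hker hG]
  exact ⟨d * c, by simpa using hd.mul hc, by simpa [mul_assoc] using hdx⟩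

end PrimeRadical

section Sufficiency

variable {R : Type*} {Rbar : Type*} [Ring R] [Ring Rbar] {π : R →+* Rbar}

/-- Descending chains of left ideals of `R` stabilize, up to regular left multipliers modulo the
prime radical `n`, in `n^i/n^{i+1}`. -/
def StabilizesAtLevel (π : R →+* Rbar) (i : ℕ) : Prop :=
  ∀ K : ℕ → Ideal R, Antitone K → ∃ N, ∀ k, N ≤ k → ∀ x ∈ K N, x ∈ primeRadical R ^ i →
    ∃ d y, IsRegElem (π d) ∧ y ∈ K k ∧ y ∈ primeRadical R ^ i ∧
      d * x - y ∈ primeRadical R ^ (i + 1)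

/-- Right multiplication by elements that are regular modulo the prime radical `n` is injective on
`n^i/n^{i+1}`, up to torsion. -/
def RightCancelsAtLevel (π : R →+* Rbar) (i : ℕ) : Prop :=
  ∀ x ∈ primeRadical R ^ i, ∀ c, IsRegElem (π c) →
    (∃ d, IsRegElem (π d) ∧ d * (x * c) ∈ primeRadical R ^ (i + 1)) →
    ∃ d, IsRegElem (π d) ∧ d * x ∈ primeRadical R ^ (i + 1)

theorem StabilizesAtLevel.exists_leftOre {i : ℕ} (hs : StabilizesAtLevel π i)
    (hr : RightCancelsAtLevel π i) {x c : R} (hx : x ∈ primeRadical R ^ i)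
    (hc : IsRegElem (π c)) :
    ∃ d y, IsRegElem (π d) ∧ d * x - y * c ∈ primeRadical R ^ (i + 1) := by
  let K : ℕ → Ideal R := fun j =>
    Submodule.map (LinearMap.toSpanSingleton R R (c ^ j)) (primeRadical R ^ i)
  have hK : ∀ j y, y ∈ K j ↔ ∃ z ∈ primeRadical R ^ i, z * c ^ j = y := fun j y => by
    simp [K]
  obtain ⟨N, hN⟩ := hs K (antitone_nat_of_succ_le fun j y hy => by
    obtain ⟨z, hz, rfl⟩ := (hK _ _).1 hy
    exact (hK _ _).2 ⟨z * c, Ideal.mul_mem_right _ _ hz, by rw [pow_succ', mul_assoc]⟩)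
  obtain ⟨d, y, hd, hy, -, hdy⟩ := hN (N + 1) (Nat.le_succ N) (x * c ^ N)
    ((hK _ _).2 ⟨x, hx, rfl⟩) (Ideal.mul_mem_right _ _ hx)
  obtain ⟨z, hz, rfl⟩ := (hK _ _).1 hy
  have hmem : d * x - z * c ∈ primeRadical R ^ i :=
    sub_mem (Ideal.mul_mem_left _ _ hx) (Ideal.mul_mem_right _ _ hz)
  obtain ⟨e, he, hez⟩ := hr _ hmem (c ^ N) (by simpa using hc.pow N)
    ⟨1, by simpa using IsRegElem.one, by
      rw [pow_succ'] at hdy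
      simpa [sub_mul, mul_assoc] using hdy⟩
  exact ⟨e * d, e * z, by simpa using he.mul hd, by simpa [mul_sub, mul_assoc] using hez⟩

theorem exists_leftOre_of_forall_level {k : ℕ}
    (hnil : primeRadical R ^ (k + 1) = ⊥) (hs : ∀ i, StabilizesAtLevel π i)
    (hr : ∀ i, RightCancelsAtLevel π i) (a : R) {c : R} (hc : IsRegElem (π c)) :
    ∃ d b, IsRegElem (π d) ∧ d * a = b * c := by
  have key : ∀ i, ∃ d b, IsRegElem (π d) ∧ d * a - b * c ∈ primeRadical R ^ i := by
    intro i
    induction i with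
    | zero => exact ⟨1, 0, by simpa using IsRegElem.one, mem_primeRadical_pow_zero _⟩
    | succ i ih =>
      obtain ⟨d, b, hd, hdb⟩ := ih
      obtain ⟨e, y, he, hey⟩ := (hs i).exists_leftOre (hr i) hdb hc
      refine ⟨e * d, e * b + y, by simpa using he.mul hd, ?_⟩
      convert hey using 1
      noncomm_ring
  obtain ⟨d, b, hd, hdb⟩ := key (k + 1)
  rw [hnil, Submodule.mem_bot, sub_eq_zero] at hdb
  exact ⟨d, b, hd, hdb⟩

theorem exists_mul_mem_of_forall_level {k : ℕ}
    (hnil : primeRadical R ^ (k + 1) = ⊥) (hs : ∀ i, StabilizesAtLevel π i)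
    {K : ℕ → Ideal R} (hK : Antitone K) :
    ∃ N, ∀ m, N ≤ m → ∀ x ∈ K N, ∃ d, IsRegElem (π d) ∧ d * x ∈ K m := by
  choose N hN using fun i => hs i K hK
  refine ⟨(Finset.range (k + 1)).sup N, fun m hm x hx => ?_⟩
  have key : ∀ i ≤ k + 1, ∃ d y, IsRegElem (π d) ∧ y ∈ K m ∧
      d * x - y ∈ primeRadical R ^ i := by
    intro i
    induction i with
    | zero =>
      exact fun _ => ⟨1, 0, by simpa using IsRegElem.one, zero_mem _, mem_primeRadical_pow_zero _⟩
    | succ i ih =>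
      intro hi
      obtain ⟨d, y, hd, hy, hdy⟩ := ih (by omega)
      have hNi : N i ≤ (Finset.range (k + 1)).sup N :=
        Finset.le_sup (f := N) (Finset.mem_range.2 hi)
      obtain ⟨e, z, he, hz, -, hez⟩ := hN i m (hNi.trans hm) (d * x - y)
        (sub_mem (Ideal.mul_mem_left _ _ (hK hNi hx)) (hK (hNi.trans hm) hy)) hdy
      refine ⟨e * d, e * y + z, by simpa using he.mul hd,
        add_mem (Ideal.mul_mem_left _ _ hy) hz, ?_⟩
      convert hez using 1
      noncomm_ring
  obtain ⟨d, y, hd, hy, hdy⟩ := key (k + 1) le_rfl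
  rw [hnil, Submodule.mem_bot, sub_eq_zero] at hdy
  exact ⟨d, hd, hdy ▸ hy⟩

section Levels

variable (hπ : Function.Surjective π) (hker : RingHom.ker π = primeRadical R)
  (hG : IsSemiprimeLeftGoldie Rbar)
include hπ hker hG

theorem stabilizesAtLevel_zero : StabilizesAtLevel π 0 := by
  intro K hK
  have hM : ∀ r : Rbar, RingHom.id Rbar r = 0 → ∀ m : Rbar, r • m = 0 := by
    rintro _ rfl m
    simp
  obtain ⟨N, hN⟩ := NoInfiniteIndepFamily.stabilizes_of_isCbarClosedSubmodule
    (π := RingHom.id Rbar) Function.surjective_id hG hM hG.goldie.2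
    (fun j => closureSub Function.surjective_id hG hM (Ideal.map π (K j)))
    (fun j => isCbarClosedSubmodule_closureSub _ _ _ _)
    (fun j k hjk => closureSub_mono _ _ _ (Ideal.map_mono (hK hjk)))
  refine ⟨N, fun k hk x hx _ => ?_⟩
  have hxk : π x ∈ closureSub Function.surjective_id hG hM (Ideal.map π (K k)) := by
    rw [hN k hk]
    exact ⟨1, IsRegElem.one, by simpa using Ideal.mem_map_of_mem π hx⟩
  obtain ⟨c, hc, hcx⟩ := hxk
  obtain ⟨y, hy, hyx⟩ := (Ideal.mem_map_iff_of_surjective π hπ).1 hcx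
  obtain ⟨d, rfl⟩ := hπ c
  refine ⟨d, y, hc, hy, mem_primeRadical_pow_zero _, ?_⟩
  rw [zero_add, Submodule.pow_one, ← map_eq_zero_iff_mem_primeRadical hker]
  simp [hyx]

theorem stabilizesAtLevel_of_stabilizes {i : ℕ}
    (hdcc : ∀ g : ℕ → Submodule R (fMod π i), (∀ j, IsCbarClosedSubmodule π (g j)) →
      (∀ j k, j ≤ k → g k ≤ g j) → ∃ N, ∀ k, N ≤ k → g k = g N) :
    StabilizesAtLevel π i := by
  intro K hK
  have hM := smul_fMod_eq_zero (i := i) hker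
  obtain ⟨N, hN⟩ := hdcc
    (fun j => closureSub hπ hG hM
      ((Submodule.comap (primeRadical R ^ i : Ideal R).subtype (K j)).map (fProj π i)))
    (fun j => isCbarClosedSubmodule_closureSub _ _ _ _)
    (fun j k hjk => closureSub_mono _ _ _ (Submodule.map_mono (Submodule.comap_mono (hK hjk))))
  refine ⟨N, fun k hk x hx hxi => ?_⟩
  have hxk : fProj π i ⟨x, hxi⟩ ∈ closureSub hπ hG hM
      ((Submodule.comap (primeRadical R ^ i : Ideal R).subtype (K k)).map (fProj π i)) := by
    rw [hN k hk]
    exact ⟨1, by simpa using IsRegElem.one, by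
      rw [one_smul]
      exact Submodule.mem_map_of_mem hx⟩
  obtain ⟨c, hc, y, hy, hyx⟩ := hxk
  rw [← map_smul, ← sub_eq_zero, ← map_sub, fProj_eq_zero_iff hπ hker hG] at hyx
  obtain ⟨e, he, hey⟩ := hyx
  refine ⟨e * c, e * (y : R), by simpa using he.mul hc, Ideal.mul_mem_left _ _ hy,
    Ideal.mul_mem_left _ _ y.2, ?_⟩
  rw [← neg_mem_iff]
  simpa [mul_sub, mul_assoc] using hey

omit hπ hG in
theorem rightCancelsAtLevel_zero : RightCancelsAtLevel π 0 := by
  rintro x - c hc ⟨d, hd, hdx⟩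
  refine ⟨1, by simpa using IsRegElem.one, ?_⟩
  rw [zero_add, Submodule.pow_one, ← map_eq_zero_iff_mem_primeRadical hker] at hdx ⊢
  rw [one_mul]
  rw [map_mul, map_mul] at hdx
  exact hc.2 _ (hd.1 _ hdx)

theorem rightCancelsAtLevel_of_injective {i : ℕ}
    (he : ∀ c : R, IsRegElem (π c) →
      ∀ (x : R) (hx : x ∈ primeRadical R ^ i) (hxc : x * c ∈ primeRadical R ^ i),
        fMk π i (x * c) hxc = 0 → fMk π i x hx = 0) :
    RightCancelsAtLevel π i := by
  intro x hx c hc hd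
  have hxc : x * c ∈ primeRadical R ^ i := Ideal.mul_mem_right _ _ hx
  have := he c hc x hx hxc
  rw [fMk_eq_fProj, fMk_eq_fProj, fProj_eq_zero_iff hπ hker hG, fProj_eq_zero_iff hπ hker hG]
    at this
  exact this hd

end Levels

section Quotient

variable {Q : Type*} [Ring Q] {φ : R →+* Q} {S : Set R} (hunit : ∀ s ∈ S, IsUnit (φ s))
  (hden : ∀ q : Q, ∃ c ∈ S, ∃ r, φ c * q = φ r)
include hunit hden

theorem isArtinianRing_of_denominators
    (hchain : ∀ K : ℕ → Ideal R, Antitone K →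
      ∃ N, ∀ m, N ≤ m → ∀ x ∈ K N, ∃ d ∈ S, d * x ∈ K m) : IsArtinianRing Q := by
  refine monotone_stabilizes_iff_artinian.1 fun I => ?_
  obtain ⟨N, hN⟩ := hchain (fun j => Ideal.comap φ (OrderDual.ofDual (I j)))
    fun j k hjk => Ideal.comap_mono (I.monotone hjk)
  refine ⟨N, fun m hm => le_antisymm (I.monotone hm) fun q hq => ?_⟩
  obtain ⟨c, hc, r, hr⟩ := hden q
  obtain ⟨d, hd, hdr⟩ := hN m hm r (by
    rw [Ideal.mem_comap, ← hr]
    exact Ideal.mul_mem_left _ _ hq)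
  rw [Ideal.mem_comap, map_mul, ← hr, ← mul_assoc, ← map_mul] at hdr
  have hu : IsUnit (φ (d * c)) := by
    rw [map_mul]
    exact (hunit d hd).mul (hunit c hc)
  exact (Ideal.unit_mul_mem_iff_mem _ hu).1 hdr

theorem isLeftQuotRing_of_isArtinianRing [IsArtinianRing Q] (hinj : Function.Injective φ)
    (hreg : ∀ s ∈ S, IsRegElem s) : IsLeftQuotRing φ where
  inj := hinj
  isUnit := by
    intro c hc
    have hzero : ∀ q : Q, q * φ c = 0 → q = 0 := by
      intro q hq
      obtain ⟨s, hs, r, hr⟩ := hden q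
      have : r * c = 0 := hinj (by rw [map_mul, ← hr, mul_assoc, hq, mul_zero, map_zero])
      rw [hc.2 r this, map_zero] at hr
      exact (hunit s hs).mul_right_eq_zero.1 hr
    obtain ⟨q, hq⟩ := IsArtinian.surjective_of_injective_endomorphism
      (LinearMap.toSpanSingleton Q Q (φ c))
      ((injective_iff_map_eq_zero _).2 fun q hq => hzero q (by simpa using hq)) 1
    replace hq : q * φ c = 1 := by simpa using hq
    refine ⟨⟨φ c, q, ?_, hq⟩, rfl⟩
    rw [← sub_eq_zero]
    exact hzero _ (by rw [sub_mul, mul_assoc, hq, mul_one, one_mul, sub_self])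
  denom q := by
    obtain ⟨c, hc, r, hr⟩ := hden q
    exact ⟨c, r, hreg c hc, hr⟩

end Quotient

theorem hasArtinianLeftQuot_of_forall_level {R : Type u} [Ring R] {π : R →+* Rbar} {k : ℕ}
    (hnil : primeRadical R ^ (k + 1) = ⊥) (hs : ∀ i, StabilizesAtLevel π i)
    (hr : ∀ i, RightCancelsAtLevel π i) (hreg : ∀ c : R, IsRegElem (π c) → IsRegElem c) :
    HasArtinianLeftQuot R := by
  let S : Submonoid R :=
    { carrier := {c | IsRegElem (π c)}
      one_mem' := by simpa using IsRegElem.one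
      mul_mem' := fun ha hb => by simpa using IsRegElem.mul ha hb }
  obtain ⟨hOre⟩ : Nonempty (OreLocalization.OreSet S) := by
    rw [OreLocalization.nonempty_oreSet_iff]
    refine ⟨fun r₁ r₂ s hrs => ⟨1, ?_⟩, fun r s => ?_⟩
    · rw [sub_eq_zero.1 ((hreg s s.2).2 (r₁ - r₂) (by rw [sub_mul, hrs, sub_self]))]
    · obtain ⟨d, b, hd, hdb⟩ := exists_leftOre_of_forall_level hnil hs hr r s.2
      exact ⟨b, ⟨d, hd⟩, hdb⟩
  let φ : R →+* OreLocalization S R := OreLocalization.numeratorRingHom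
  have hunit : ∀ s ∈ (S : Set R), IsUnit (φ s) := fun s hs =>
    OreLocalization.numerator_isUnit ⟨s, hs⟩
  have hden : ∀ q, ∃ c ∈ (S : Set R), ∃ r, φ c * q = φ r := by
    intro q
    induction q using OreLocalization.ind with
    | _ r s => exact ⟨s, s.2, r, OreLocalization.mul_cancel⟩
  have hinj : Function.Injective φ := OreLocalization.numeratorHom_inj fun s hs x hx =>
    (hreg s hs).1 x hx
  have : IsArtinianRing (OreLocalization S R) := isArtinianRing_of_denominators hunit hden
    fun K hK => exists_mul_mem_of_forall_level hnil hs hK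
  exact ⟨⟨OreLocalization S R, φ, isLeftQuotRing_of_isArtinianRing hunit hden hinj
    fun s hs => hreg s hs⟩, this⟩

theorem hasArtinianLeftQuot_of_stabilizes {R : Type u} [Ring R] {π : R →+* Rbar}
    (hπ : Function.Surjective π) (hker : RingHom.ker π = primeRadical R)
    (hG : IsSemiprimeLeftGoldie Rbar) (hnil : IsNilpotentIdeal (primeRadical R))
    (hreg : ∀ c : R, IsRegElem (π c) → IsRegElem c)
    (he : ∀ i : ℕ, 1 ≤ i → ∀ c : R, IsRegElem (π c) →
      ∀ (x : R) (hx : x ∈ primeRadical R ^ i) (hxc : x * c ∈ primeRadical R ^ i),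
        fMk π i (x * c) hxc = 0 → fMk π i x hx = 0)
    (hdcc : ∀ i : ℕ, 1 ≤ i → ∀ g : ℕ → Submodule R (fMod π i),
      (∀ j, IsCbarClosedSubmodule π (g j)) → (∀ j k, j ≤ k → g k ≤ g j) →
        ∃ N, ∀ k, N ≤ k → g k = g N) :
    HasArtinianLeftQuot R := by
  obtain ⟨k, hk⟩ := hnil
  refine hasArtinianLeftQuot_of_forall_level hk (fun i => ?_) (fun i => ?_) hreg
  · obtain rfl | hi := i.eq_zero_or_pos
    · exact stabilizesAtLevel_zero hπ hker hG
    · exact stabilizesAtLevel_of_stabilizes hπ hker hG (hdcc i hi)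
  · obtain rfl | hi := i.eq_zero_or_pos
    · exact rightCancelsAtLevel_zero hker
    · exact rightCancelsAtLevel_of_injective hπ hker hG (he i hi)

end Sufficiency

section Necessity

theorem exists_isPrimeNC_le_isMaximal {Q : Type*} [Ring Q] (M : Ideal Q) [hM : M.IsMaximal] :
    ∃ P : Ideal Q, P.IsPrimeNC ∧ P ≤ M := by
  let P : Ideal Q :=
    { carrier := {q | ∀ x, q * x ∈ M}
      zero_mem' := fun x => by simp
      add_mem' := fun ha hb x => by
        rw [add_mul]
        exact add_mem (ha x) (hb x)
      smul_mem' := fun r a ha x => by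
        rw [smul_eq_mul, mul_assoc]
        exact Ideal.mul_mem_left _ _ (ha x) }
  have hmem : ∀ q, q ∈ P ↔ ∀ x, q * x ∈ M := fun _ => Iff.rfl
  have hle : P ≤ M := fun q hq => by simpa using (hmem q).1 hq 1
  refine ⟨P, ⟨ne_top_of_le_ne_top hM.ne_top hle, fun a ha r => (hmem _).2 fun x => ?_,
    fun a b hab => ?_⟩, hle⟩
  · rw [mul_assoc]
    exact (hmem a).1 ha _
  · by_contra! hcon
    obtain ⟨x, hx⟩ := not_forall.1 (mt (hmem b).2 hcon.2)
    refine hcon.1 ((hmem a).2 fun y => ?_)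
    obtain ⟨q, hq⟩ := hM.exists_inv hx
    obtain ⟨m, hm, hqm⟩ : ∃ m ∈ M, q * (b * x) + m = 1 := hq
    have hy : y = y * q * b * x + y * m := by
      rw [mul_assoc, mul_assoc, ← mul_add, ← mul_assoc, mul_assoc q, hqm, mul_one]
    rw [hy, mul_add]
    refine add_mem ?_ (Ideal.mul_mem_left _ _ (Ideal.mul_mem_left _ _ hm))
    have := (hmem _).1 (hab (y * q)) x
    simpa [mul_assoc] using this

namespace IsLeftQuotRing

variable {R : Type*} {Q : Type*} [Ring R] [Ring Q] {φ : R →+* Q} (h : IsLeftQuotRing φ)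

include h in
theorem exists_leftOre (a : R) {c : R} (hc : IsRegElem c) :
    ∃ d b, IsRegElem d ∧ d * a = b * c := by
  obtain ⟨u, hu⟩ := h.isUnit c hc
  obtain ⟨d, b, hd, hdb⟩ := h.denom (φ a * ↑u⁻¹)
  refine ⟨d, b, hd, h.inj ?_⟩
  rw [map_mul, map_mul, ← hdb, ← hu, mul_assoc, mul_assoc, Units.inv_mul, mul_one]

/-- The left ideal `C⁻¹I` of the left quotient ring, for a left ideal `I`. -/
def loc (I : Ideal R) : Ideal Q where
  carrier := locSet φ I
  zero_mem' := ⟨1, 0, IsRegElem.one, zero_mem _, by simp⟩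
  add_mem' := by
    rintro q q' ⟨c, a, hc, ha, hca⟩ ⟨c', a', hc', ha', hca'⟩
    obtain ⟨d, b, hd, hdb⟩ := h.exists_leftOre c hc'
    refine ⟨d * c, d * a + b * a', hd.mul hc,
      add_mem (Ideal.mul_mem_left _ _ ha) (Ideal.mul_mem_left _ _ ha'), ?_⟩
    rw [mul_add, map_add, map_mul φ d a, ← hca, map_mul φ b a', ← hca', ← mul_assoc (φ b),
      ← map_mul φ b c', ← hdb, map_mul φ d c, mul_assoc]
  smul_mem' := by
    rintro p q ⟨c, a, hc, ha, hca⟩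
    obtain ⟨c', r, hc', hr⟩ := h.denom p
    obtain ⟨d, b, hd, hdb⟩ := h.exists_leftOre r hc
    refine ⟨d * c', b * a, hd.mul hc', Ideal.mul_mem_left _ _ ha, ?_⟩
    rw [smul_eq_mul, map_mul, mul_assoc, ← mul_assoc (φ c'), hr, ← mul_assoc, ← map_mul, hdb,
      map_mul, mul_assoc, hca, map_mul]

theorem map_mem_loc {I : Ideal R} {x : R} : φ x ∈ h.loc I ↔ ∃ c, IsRegElem c ∧ c * x ∈ I := by
  refine ⟨fun ⟨c, a, hc, ha, hca⟩ => ⟨c, hc, ?_⟩, fun ⟨c, hc, hcx⟩ => ⟨c, _, hc, hcx, by simp⟩⟩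
  rw [← map_mul] at hca
  rwa [h.inj hca]

theorem loc_mono {I J : Ideal R} (hIJ : I ≤ J) : h.loc I ≤ h.loc J :=
  fun _ ⟨c, a, hc, ha, hca⟩ => ⟨c, a, hc, hIJ ha, hca⟩

theorem exists_mul_eq_of_mem_loc [IsArtinianRing Q] {I : Ideal R} {c : R} (hc : IsRegElem c)
    (hI : ∀ x ∈ I, x * c ∈ I) {y : Q} (hy : y ∈ h.loc I) : ∃ z ∈ h.loc I, z * φ c = y := by
  have hmaps : ∀ q ∈ h.loc I, LinearMap.toSpanSingleton Q Q (φ c) q ∈ h.loc I := by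
    rintro q ⟨d, a, hd, ha, hda⟩
    refine ⟨d, a * c, hd, hI a ha, ?_⟩
    rw [LinearMap.toSpanSingleton_apply, smul_eq_mul, ← mul_assoc, hda, map_mul]
  obtain ⟨z, hz⟩ := IsArtinian.surjective_of_injective_endomorphism
    ((LinearMap.toSpanSingleton Q Q (φ c)).restrict hmaps)
    (fun a b hab => Subtype.ext ((h.isUnit c hc).mul_right_cancel (by
      simpa using congrArg Subtype.val hab))) ⟨y, hy⟩
  exact ⟨z, z.2, by simpa using congrArg Subtype.val hz⟩

theorem mem_loc_of_mul_mem_loc [IsArtinianRing Q] {I : Ideal R} {c : R} (hc : IsRegElem c)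
    (hI : ∀ x ∈ I, x * c ∈ I) {q : Q} (hq : q * φ c ∈ h.loc I) : q ∈ h.loc I := by
  obtain ⟨z, hz, hzq⟩ := h.exists_mul_eq_of_mem_loc hc hI hq
  rwa [← (h.isUnit c hc).mul_right_cancel hzq]

include h

theorem isPrimeNC_comap [IsArtinianRing Q] {P : Ideal Q} (hP : P.IsPrimeNC) :
    (P.comap φ).IsPrimeNC := by
  refine ⟨fun htop => hP.1 ?_, fun a ha r => ?_, fun a b hab => ?_⟩
  · rw [Ideal.eq_top_iff_one] at *
    simpa using htop
  · rw [Ideal.mem_comap, map_mul]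
    exact hP.2.1 _ ha _
  · let I : Ideal R :=
      { carrier := {x | ∀ r, φ (x * r * b) ∈ P}
        zero_mem' := fun r => by simp
        add_mem' := fun hx hy r => by
          rw [add_mul, add_mul, map_add]
          exact add_mem (hx r) (hy r)
        smul_mem' := fun s x hx r => by
          rw [smul_eq_mul, mul_assoc, mul_assoc, map_mul, ← mul_assoc x]
          exact Ideal.mul_mem_left _ _ (hx r) }
    have hI : ∀ x, x ∈ I ↔ ∀ r, φ (x * r * b) ∈ P := fun _ => Iff.rfl
    refine hP.2.2 (φ a) (φ b) fun q => ?_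
    obtain ⟨c, r, hc, hr⟩ := h.denom q
    obtain ⟨z, ⟨d, x, hd, hx, hdx⟩, hz⟩ := h.exists_mul_eq_of_mem_loc hc (I := I)
      (fun x hx => (hI _).2 fun r => by
        rw [mul_assoc x]
        exact (hI _).1 hx _)
      (h.map_mem_loc.2 ⟨1, IsRegElem.one, by
        rw [one_mul]
        exact (hI a).2 hab⟩)
    rw [← hz, mul_assoc z, hr, ← Ideal.unit_mul_mem_iff_mem _ (h.isUnit d hd), ← mul_assoc,
      ← mul_assoc, hdx, ← map_mul, ← map_mul]
    exact (hI x).1 hx r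

theorem mem_primeRadical_iff [IsArtinianRing Q] {x : R} :
    x ∈ primeRadical R ↔ φ x ∈ Ring.jacobson Q := by
  constructor
  · intro hx
    rw [Ring.jacobson_eq_sInf_isMaximal, Submodule.mem_sInf]
    intro M hM
    have : Ideal.IsMaximal M := hM
    obtain ⟨P, hP, hle⟩ := exists_isPrimeNC_le_isMaximal M
    exact hle ((Submodule.mem_sInf.1 hx) _ (h.isPrimeNC_comap hP))
  · intro hx
    refine Submodule.mem_sInf.2 fun P hP => ?_
    by_contra hxP
    obtain ⟨m, hm⟩ := IsSemiprimaryRing.isNilpotent (R := Q)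
    have key : ∀ i, (Ring.jacobson Q ^ i).comap φ ≤ P → (1 : R) ∈ P := by
      intro i
      induction i with
      | zero =>
        intro hle
        exact hle (by rw [Ideal.mem_comap, Submodule.pow_zero, Ideal.one_eq_top]; trivial)
      | succ i ih =>
        refine fun hle => ih fun y hy => ?_
        refine (hP.2.2 y x fun r => hle ?_).resolve_right hxP
        rw [Ideal.mem_comap, map_mul, Submodule.pow_succ, map_mul]
        exact Ideal.mul_mem_mul (Ideal.mul_mem_right _ _ hy) hx
    refine hP.1 ((Ideal.eq_top_iff_one P).2 (key m fun y hy => ?_))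
    rw [hm] at hy
    have hy0 : φ y = 0 := by simpa using hy
    rw [(map_eq_zero_iff φ h.inj).1 hy0]
    exact zero_mem _

theorem isNilpotentIdeal_primeRadical [IsArtinianRing Q] :
    IsNilpotentIdeal (primeRadical R) := by
  obtain ⟨m, hm⟩ := IsSemiprimaryRing.isNilpotent (R := Q)
  have key : ∀ i, primeRadical R ^ i ≤ (Ring.jacobson Q ^ i).comap φ := by
    intro i
    induction i with
    | zero =>
      intro x _
      rw [Ideal.mem_comap, Submodule.pow_zero, Ideal.one_eq_top]
      trivial
    | succ i ih =>
      rw [Submodule.pow_succ, Submodule.pow_succ]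
      refine Submodule.mul_le.2 fun x hx y hy => ?_
      rw [Ideal.mem_comap, map_mul]
      exact Ideal.mul_mem_mul (ih hx) (h.mem_primeRadical_iff.1 hy)
  refine ⟨m, eq_bot_iff.2 fun x hx => ?_⟩
  have hx0 := key m (primeRadical_pow_succ_le m hx)
  rw [hm] at hx0
  have hx0 : φ x = 0 := by simpa using hx0
  exact (map_eq_zero_iff φ h.inj).1 hx0

variable [IsArtinianRing Q] {Rbar : Type*} [Ring Rbar] {π : R →+* Rbar}
  (hπ : Function.Surjective π) (hker : RingHom.ker π = primeRadical R)
include hker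

theorem map_eq_zero_iff_mem_jacobson {x : R} : π x = 0 ↔ φ x ∈ Ring.jacobson Q := by
  rw [map_eq_zero_iff_mem_primeRadical hker, h.mem_primeRadical_iff]

theorem isRegElem_of_isRegElem_map {c : R} (hc : IsRegElem (π c)) : IsRegElem c := by
  have hinj : ∀ q, q * φ c ∈ Ring.jacobson Q → q ∈ Ring.jacobson Q := by
    intro q hq
    obtain ⟨s, r, hs, hr⟩ := h.denom q
    rw [← Ideal.unit_mul_mem_iff_mem _ (h.isUnit s hs), hr,
      ← h.map_eq_zero_iff_mem_jacobson hker]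
    refine hc.2 _ ?_
    rw [← map_mul, h.map_eq_zero_iff_mem_jacobson hker, map_mul, ← hr, mul_assoc]
    exact Ideal.mul_mem_left _ _ hq
  let f : Q →ₗ[Q] Q := LinearMap.toSpanSingleton Q Q (φ c)
  have hf : ∀ q, f q = q * φ c := fun q => by simp [f]
  have hle : Ring.jacobson Q ≤ Submodule.comap f (Ring.jacobson Q) := fun q hq => by
    rw [Submodule.mem_comap, hf]
    exact Ideal.mul_mem_right _ _ hq
  obtain ⟨q, hq⟩ := IsArtinian.surjective_of_injective_endomorphism
    (Submodule.mapQ (Ring.jacobson Q) (Ring.jacobson Q) f hle)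
    ((injective_iff_map_eq_zero _).2 fun q => by
      obtain ⟨q, rfl⟩ := Submodule.mkQ_surjective _ q
      rw [Submodule.mkQ_apply, Submodule.mapQ_apply, Submodule.Quotient.mk_eq_zero,
        Submodule.Quotient.mk_eq_zero, hf]
      exact hinj q)
    (Submodule.Quotient.mk 1)
  obtain ⟨q, rfl⟩ := Submodule.mkQ_surjective _ q
  rw [Submodule.mkQ_apply, Submodule.mapQ_apply, Submodule.Quotient.eq, hf] at hq
  have hnil : IsNilpotent (q * φ c - 1) := by
    obtain ⟨m, hm⟩ := IsSemiprimaryRing.isNilpotent (R := Q)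
    have := Submodule.pow_mem_pow (Ring.jacobson Q) hq m
    rw [hm] at this
    exact ⟨m, by simpa using this⟩
  obtain ⟨u, hu⟩ := hnil.isUnit_add_one
  rw [sub_add_cancel] at hu
  have hinv : ↑u⁻¹ * q * φ c = 1 := by rw [mul_assoc, ← hu, Units.inv_mul]
  have hbij : Function.Bijective f := IsNoetherian.bijective_of_surjective_endomorphism f
    fun y => ⟨y * (↑u⁻¹ * q), by rw [hf, mul_assoc, hinv, mul_one]⟩
  refine ⟨fun x hx => h.inj ?_, fun x hx => h.inj (hbij.1 ?_)⟩
  · rw [map_zero, ← one_mul (φ x), ← hinv, mul_assoc, ← map_mul, hx, map_zero, mul_zero]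
  · rw [hf, hf, ← map_mul, hx, map_zero, zero_mul]

include hπ

theorem isRegElem_map {c : R} (hc : IsRegElem c) : IsRegElem (π c) := by
  refine ⟨fun x hx => ?_, fun x hx => ?_⟩ <;> obtain ⟨x, rfl⟩ := hπ x <;>
    rw [← map_mul, h.map_eq_zero_iff_mem_jacobson hker, map_mul] at hx <;>
    rw [h.map_eq_zero_iff_mem_jacobson hker]
  · exact (Ideal.unit_mul_mem_iff_mem _ (h.isUnit c hc)).1 hx
  · obtain ⟨u, hu⟩ := h.isUnit c hc
    have := Ideal.mul_mem_right (↑u⁻¹ : Q) _ hx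
    rwa [← hu, mul_assoc, Units.mul_inv, mul_one] at this

theorem accLeftAnnihilators : ACCLeftAnnihilators Rbar := by
  intro f hf hmono
  let L : ℕ → Ideal Q := fun i =>
    { carrier := {q | ∀ s, (∀ a ∈ f i, a * π s = 0) → q * φ s ∈ Ring.jacobson Q}
      zero_mem' := fun s _ => by simp
      add_mem' := fun ha hb s hs => by
        rw [add_mul]
        exact add_mem (ha s hs) (hb s hs)
      smul_mem' := fun r a ha s hs => by
        rw [smul_eq_mul, mul_assoc]
        exact Ideal.mul_mem_left _ _ (ha s hs) }
  have hL : ∀ i q, q ∈ L i ↔ ∀ s, (∀ a ∈ f i, a * π s = 0) → q * φ s ∈ Ring.jacobson Q :=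
    fun _ _ => Iff.rfl
  obtain ⟨N, hN⟩ := monotone_stabilizes_iff_noetherian.2 (inferInstance : IsNoetherian Q Q)
    ⟨L, fun i j hij q hq => (hL j q).2 fun s hs =>
      (hL i q).1 hq s fun a ha => hs a (hmono i j hij ha)⟩
  refine ⟨N, fun k hk => (hmono N k hk).antisymm' fun a ha => ?_⟩
  obtain ⟨a, rfl⟩ := hπ a
  have haL : φ a ∈ L k := (hL k _).2 fun s hs => by
    rw [← map_mul, ← h.map_eq_zero_iff_mem_jacobson hker, map_mul]
    exact hs _ ha
  rw [show L k = L N from (hN k hk).symm, hL] at haL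
  obtain ⟨S, hS⟩ := hf N
  rw [hS]
  intro s hs
  obtain ⟨s, rfl⟩ := hπ s
  rw [← map_mul, h.map_eq_zero_iff_mem_jacobson hker, map_mul]
  refine haL s fun b hb => ?_
  rw [hS] at hb
  exact hb _ hs

theorem noInfiniteIndepFamily : NoInfiniteIndepFamily Rbar Rbar := by
  rintro ⟨f, hf0, hf⟩
  obtain ⟨N, hN⟩ := monotone_stabilizes_iff_noetherian.2 (inferInstance : IsNoetherian Q Q)
    ⟨fun j => h.loc (Ideal.comap π (⨆ (i) (_ : i < j), f i)), fun j k hjk =>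
      h.loc_mono (Ideal.comap_mono
        (iSup_mono fun i => iSup_const_mono fun hi => hi.trans_le hjk))⟩
  obtain ⟨x, hx, hx0⟩ := (f N).exists_mem_ne_zero_of_ne_bot (hf0 N)
  obtain ⟨y, rfl⟩ := hπ x
  have hy : φ y ∈ h.loc (Ideal.comap π (⨆ (i) (_ : i < N), f i)) := by
    rw [show h.loc (Ideal.comap π (⨆ (i) (_ : i < N), f i)) = _ from hN (N + 1) (Nat.le_succ N)]
    refine h.map_mem_loc.2 ⟨1, IsRegElem.one, ?_⟩
    rw [one_mul, Ideal.mem_comap]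
    exact (le_iSup₂_of_le (f := fun i (_ : i < N + 1) => f i) N (Nat.lt_succ_self N) le_rfl) hx
  obtain ⟨c, hc, hcy⟩ := h.map_mem_loc.1 hy
  rw [Ideal.mem_comap, map_mul] at hcy
  have hle : ⨆ (i) (_ : i < N), f i ≤ ⨆ (i) (_ : i ≠ N), f i :=
    iSup_mono fun i => iSup_const_mono fun hi => hi.ne
  exact hx0 ((h.isRegElem_map hπ hker hc).1 _
    (Submodule.disjoint_def.1 (hf N) _ (Ideal.mul_mem_left _ _ hx) (hle hcy)))

theorem isLeftGoldie : IsLeftGoldie Rbar :=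
  ⟨h.accLeftAnnihilators hπ hker, h.noInfiniteIndepFamily hπ hker⟩

theorem fMk_eq_zero_of_mul {i : ℕ} {c : R} (hc : IsRegElem (π c)) {x : R}
    (hx : x ∈ primeRadical R ^ i) (hxc : x * c ∈ primeRadical R ^ i)
    (hzero : fMk π i (x * c) hxc = 0) : fMk π i x hx = 0 := by
  have hG := isSemiprimeLeftGoldie_of_isLeftGoldie hπ hker (h.isLeftGoldie hπ hker)
  rw [fMk_eq_fProj, fProj_eq_zero_iff hπ hker hG] at hzero ⊢
  obtain ⟨d, hd, hdx⟩ := hzero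
  have hmem : φ (d * x) ∈ h.loc (primeRadical R ^ (i + 1)) := by
    refine h.mem_loc_of_mul_mem_loc (h.isRegElem_of_isRegElem_map hker hc)
      (fun x hx => Ideal.mul_mem_right _ _ hx) ?_
    rw [← map_mul, mul_assoc]
    exact h.map_mem_loc.2 ⟨1, IsRegElem.one, by simpa using hdx⟩
  obtain ⟨e, he, hex⟩ := h.map_mem_loc.1 hmem
  exact ⟨e * d, by simpa using (h.isRegElem_map hπ hker he).mul hd, by simpa [mul_assoc] using hex⟩

/-- The left ideal `C⁻¹K` of the left quotient ring, where `K` consists of the elements of `n^i`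
whose class in `f_i` lies in `N`. -/
def locOfClass {R : Type*} {Q : Type*} {Rbar : Type*} [Ring R] [Ring Q] [Ring Rbar] {φ : R →+* Q}
    (h : IsLeftQuotRing φ) {π : R →+* Rbar} {i : ℕ} (N : Submodule R (fMod π i)) : Ideal Q :=
  h.loc ((N.comap (fProj π i)).map (primeRadical R ^ i : Ideal R).subtype)

omit hπ hker [IsArtinianRing Q] in
theorem locOfClass_mono {i : ℕ} {N N' : Submodule R (fMod π i)} (hle : N ≤ N') :
    h.locOfClass N ≤ h.locOfClass N' :=
  h.loc_mono (Submodule.map_mono (Submodule.comap_mono hle))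

theorem le_of_locOfClass_le {i : ℕ} {N N' : Submodule R (fMod π i)}
    (hN' : IsCbarClosedSubmodule π N') (hle : h.locOfClass N ≤ h.locOfClass N') : N ≤ N' := by
  intro u hu
  obtain ⟨x, rfl⟩ := fProj_surjective π i u
  have hx : φ (x : R) ∈ h.locOfClass N :=
    h.map_mem_loc.2 ⟨1, IsRegElem.one, x, hu, by simp⟩
  obtain ⟨c, hc, y, hy, hyx⟩ := h.map_mem_loc.1 (hle hx)
  refine hN' c (h.isRegElem_map hπ hker hc) _ ?_
  rw [← map_smul, show c • x = y from Subtype.ext hyx.symm]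
  exact hy

theorem stabilizes_of_monotone {i : ℕ} (g : ℕ → Submodule R (fMod π i))
    (hg : ∀ j, IsCbarClosedSubmodule π (g j)) (hmono : ∀ j k, j ≤ k → g j ≤ g k) :
    ∃ N, ∀ k, N ≤ k → g k = g N := by
  obtain ⟨N, hN⟩ := monotone_stabilizes_iff_noetherian.2 (inferInstance : IsNoetherian Q Q)
    ⟨fun j => h.locOfClass (g j), fun j k hjk => h.locOfClass_mono (hmono j k hjk)⟩
  exact ⟨N, fun k hk => (hmono N k hk).antisymm'
    (h.le_of_locOfClass_le hπ hker (hg N) (hN k hk).ge)⟩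

theorem stabilizes_of_antitone {i : ℕ} (g : ℕ → Submodule R (fMod π i))
    (hg : ∀ j, IsCbarClosedSubmodule π (g j)) (hanti : ∀ j k, j ≤ k → g k ≤ g j) :
    ∃ N, ∀ k, N ≤ k → g k = g N := by
  obtain ⟨N, hN⟩ := monotone_stabilizes_iff_artinian.2 (inferInstance : IsArtinian Q Q)
    ⟨fun j => OrderDual.toDual (h.locOfClass (g j)),
      fun j k hjk => h.locOfClass_mono (hanti j k hjk)⟩
  have hle : ∀ k, N ≤ k → h.locOfClass (g N) ≤ h.locOfClass (g k) := fun k hk =>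
    (congrArg OrderDual.ofDual (hN k hk)).le
  exact ⟨N, fun k hk => (hanti N k hk).antisymm
    (h.le_of_locOfClass_le hπ hker (hg k) (hle k hk))⟩

end IsLeftQuotRing

end Necessity

/-- **Corollary (`a9Sep12`).**  Let `R` be a ring, `n` its prime radical, `R̄ = R/n`
(realized by a surjective `π` with kernel `n`).  `R` has a left Artinian left quotient ring
iff the conditions (a) `R̄` is a left Goldie ring, (b) `n` is nilpotent, (c) `C' ⊆ C`,
(e) right multiplication by each `c̄ ∈ C̄` on `f_i` (`i ≥ 1`) is injective, hold together
with (d1) each `f_i`, `i ≥ 1`, satisfies the ACC on `C̄`-closed submodules; and likewise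
with (d1) replaced by (d2), the DCC on `C̄`-closed submodules. -/
theorem left_artinian_left_quotient_ring_criterion_closed_chains
    {R : Type u} [Ring R] (Rbar : Type v) [Ring Rbar] (π : R →+* Rbar)
    (hπsurj : Function.Surjective π) (hπker : RingHom.ker π = primeRadical R) :
    (HasArtinianLeftQuot R ↔
      (IsLeftGoldie Rbar ∧
        IsNilpotentIdeal (primeRadical R) ∧
        (∀ c : R, IsRegElem (π c) → IsRegElem c) ∧
        (∀ i : ℕ, 1 ≤ i →
          ∀ c : R, IsRegElem (π c) →
            ∀ (x : R) (hx : x ∈ primeRadical R ^ i) (hxc : x * c ∈ primeRadical R ^ i),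
              fMk π i (x * c) hxc = 0 → fMk π i x hx = 0) ∧
        (∀ i : ℕ, 1 ≤ i →
          ∀ g : ℕ → Submodule R (fMod π i), (∀ j, IsCbarClosedSubmodule π (g j)) →
            (∀ j k, j ≤ k → g j ≤ g k) → ∃ N, ∀ k, N ≤ k → g k = g N))) ∧
    (HasArtinianLeftQuot R ↔
      (IsLeftGoldie Rbar ∧
        IsNilpotentIdeal (primeRadical R) ∧
        (∀ c : R, IsRegElem (π c) → IsRegElem c) ∧
        (∀ i : ℕ, 1 ≤ i →
          ∀ c : R, IsRegElem (π c) →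
            ∀ (x : R) (hx : x ∈ primeRadical R ^ i) (hxc : x * c ∈ primeRadical R ^ i),
              fMk π i (x * c) hxc = 0 → fMk π i x hx = 0) ∧
        (∀ i : ℕ, 1 ≤ i →
          ∀ g : ℕ → Submodule R (fMod π i), (∀ j, IsCbarClosedSubmodule π (g j)) →
            (∀ j k, j ≤ k → g k ≤ g j) → ∃ N, ∀ k, N ≤ k → g k = g N))) := by
  refine ⟨⟨?_, ?_⟩, ⟨?_, ?_⟩⟩
  · rintro ⟨d, hd⟩
    exact ⟨d.quot.isLeftGoldie hπsurj hπker, d.quot.isNilpotentIdeal_primeRadical,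
      fun c hc => d.quot.isRegElem_of_isRegElem_map hπker hc,
      fun i _ c hc x hx hxc hzero => d.quot.fMk_eq_zero_of_mul hπsurj hπker hc hx hxc hzero,
      fun i _ g hg hmono => d.quot.stabilizes_of_monotone hπsurj hπker g hg hmono⟩
  · rintro ⟨hG, hnil, hreg, he, hacc⟩
    have hG := isSemiprimeLeftGoldie_of_isLeftGoldie hπsurj hπker hG
    exact hasArtinianLeftQuot_of_stabilizes hπsurj hπker hG hnil hreg he fun i hi =>
      (noInfiniteIndepFamily_of_stabilizes hπsurj hG (smul_fMod_eq_zero hπker)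
        (eq_zero_of_smul_fMod_eq_zero hπsurj hπker hG)
        (hacc i hi)).stabilizes_of_isCbarClosedSubmodule hπsurj hG (smul_fMod_eq_zero hπker)
  · rintro ⟨d, hd⟩
    exact ⟨d.quot.isLeftGoldie hπsurj hπker, d.quot.isNilpotentIdeal_primeRadical,
      fun c hc => d.quot.isRegElem_of_isRegElem_map hπker hc,
      fun i _ c hc x hx hxc hzero => d.quot.fMk_eq_zero_of_mul hπsurj hπker hc hx hxc hzero,
      fun i _ g hg hanti => d.quot.stabilizes_of_antitone hπsurj hπker g hg hanti⟩
  · rintro ⟨hG, hnil, hreg, he, hdcc⟩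
    exact hasArtinianLeftQuot_of_stabilizes hπsurj hπker
      (isSemiprimeLeftGoldie_of_isLeftGoldie hπsurj hπker hG) hnil hreg he hdcc
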